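/- Safe screening rule for regularized logistic regression (Proposition 1). Suppose (x*, t*, z*) is an optimal solution attaining η_CR, let α and δ be defined from x*, and let η̄_R be any real number with η_R ≤ η̄_R. Then every optimal solution (x̂, ẑ) of the mixed-integer problem attaining η_R satisfies: ẑ_j = 0 for every index j with η_CR + μ − γ·δ_j > η̄_R, and ẑ_j = 1 for every index j with η_CR − μ + γ·δ_j > η̄_R. -/

import Mathlib

/-- The logistic loss `L(x) = (1/m) ∑ᵢ log (1 + exp (-yᵢ (A x)ᵢ))`. -/
noncomputable def logLoss (m n : ℕ) (A : Fin m → Fin n → ℝ) (y : Fin m → ℝ)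
    (x : Fin n → ℝ) : ℝ :=
  (1 / (m : ℝ)) * ∑ i, Real.log (1 + Real.exp (-(y i) * ∑ j, A i j * x j))

/-!
Let `c j = μ - γ (g j)² / 4`, where `g` is the gradient of the loss at the relaxed optimum.
Replacing the loss by its linearization there and minimizing over `x` and `t` with `z` fixed gives
an affine function of `z` with slopes `c j`. By convexity of the loss it bounds the objective from
below at every feasible point; by first-order optimality it is at least `η_CR` on the unit box.
Changing the single coordinate `z j` to `w` therefore shows that a feasible point costs at least
`η_CR + (z j - w) c j`. The two screening rules are the cases `(z j, w) = (1, 0)` and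
`(z j, w) = (0, 1)`.
-/

open Set

lemma convexOn_finsetSum {𝕜 E β κ : Type*} [Semiring 𝕜] [PartialOrder 𝕜] [AddCommMonoid E]
    [SMul 𝕜 E] [AddCommMonoid β] [PartialOrder β] [IsOrderedAddMonoid β] [Module 𝕜 β] {s : Set E}
    {u : Finset κ} {F : κ → E → β} (hs : Convex 𝕜 s) (hF : ∀ i ∈ u, ConvexOn 𝕜 s (F i)) :
    ConvexOn 𝕜 s (∑ i ∈ u, F i) :=
  Finset.sum_induction F (ConvexOn 𝕜 s) (fun _ _ ↦ ConvexOn.add) (convexOn_const 0 hs) hF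

section Calculus

variable {E : Type*} [NormedAddCommGroup E] [NormedSpace ℝ E] {s : Set E} {f : E → ℝ}
  {f' : E →L[ℝ] ℝ} {a b : E}

lemma add_apply_sub_le_of_convexOn_of_hasFDerivWithinAt (hf : ConvexOn ℝ s f)
    (hf' : HasFDerivWithinAt f f' s a) (ha : a ∈ s) (hb : b ∈ s) :
    f a + f' (b - a) ≤ f b := by
  let ℓ : ℝ →ᵃ[ℝ] E := AffineMap.lineMap a b
  have hℓ₀ : ℓ 0 = a := AffineMap.lineMap_apply_zero a b
  have hℓ₁ : ℓ 1 = b := AffineMap.lineMap_apply_one a b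
  have hderiv : HasDerivWithinAt (f ∘ ℓ) (f' (b - a)) (ℓ ⁻¹' s) 0 :=
    (hℓ₀.symm ▸ hf').comp_hasDerivWithinAt 0 AffineMap.hasDerivWithinAt_lineMap
      (mapsTo_preimage ℓ s)
  have hslope : f' (b - a) ≤ slope (f ∘ ℓ) 0 1 :=
    (hf.comp_affineMap ℓ).le_slope_of_hasDerivWithinAt (by rwa [mem_preimage, hℓ₀])
      (by rwa [mem_preimage, hℓ₁]) one_pos hderiv
  rw [slope_def_field, Function.comp_apply, Function.comp_apply, hℓ₀, hℓ₁] at hslope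
  linarith

lemma apply_sub_nonneg_of_isMinOn_of_convex (hs : Convex ℝ s) (hmin : IsMinOn f s a)
    (hf' : HasFDerivWithinAt f f' s a) (ha : a ∈ s) (hb : b ∈ s) :
    0 ≤ f' (b - a) :=
  hmin.localize.hasFDerivWithinAt_nonneg hf'
    (sub_mem_posTangentConeAt_of_segment_subset (hs.segment_subset ha hb))

end Calculus

lemma hasDerivAt_log_one_add_exp (u : ℝ) :
    HasDerivAt (fun v ↦ Real.log (1 + Real.exp v)) (Real.sigmoid u) u := by
  convert ((Real.hasDerivAt_exp u).const_add 1).log (by positivity) using 1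
  rw [Real.sigmoid_def, Real.exp_neg]
  field_simp
  ring

lemma convexOn_log_one_add_exp : ConvexOn ℝ univ fun u ↦ Real.log (1 + Real.exp u) := by
  have hderiv : deriv (fun u ↦ Real.log (1 + Real.exp u)) = Real.sigmoid :=
    deriv_eq hasDerivAt_log_one_add_exp
  exact Monotone.convexOn_univ_of_deriv
    (fun u ↦ (hasDerivAt_log_one_add_exp u).differentiableAt) (hderiv ▸ Real.sigmoid_monotone)

lemma abs_le_add_of_sq_le_four_mul {R : Type*} [CommRing R] [LinearOrder R]
    [IsStrictOrderedRing R] {a b c : R} (ha : 0 ≤ a) (hb : 0 ≤ b) (h : c ^ 2 ≤ 4 * (a * b)) :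
    |c| ≤ a + b :=
  abs_le_of_sq_le_sq (by linarith [sq_nonneg (a - b)]) (by positivity)

lemma convex_rotatedCone :
    Convex ℝ {p : ℝ × ℝ × ℝ | 0 ≤ p.2.1 ∧ 0 ≤ p.2.2 ∧ p.1 ^ 2 ≤ p.2.2 * p.2.1} := by
  rintro ⟨x, t, z⟩ ⟨ht, hz, hx⟩ ⟨x', t', z'⟩ ⟨ht', hz', hx'⟩ a b ha hb -
  dsimp only at ht hz hx ht' hz' hx'
  refine ⟨by dsimp; positivity, by dsimp; positivity, ?_⟩
  have hcross : 2 * (x * x') ≤ z * t' + z' * t := by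
    refine (le_abs_self _).trans (abs_le_add_of_sq_le_four_mul (by positivity) (by positivity) ?_)
    calc (2 * (x * x')) ^ 2 = 4 * (x ^ 2 * x' ^ 2) := by ring
      _ ≤ 4 * (z * t * (z' * t')) := by gcongr
      _ = 4 * (z * t' * (z' * t)) := by ring
  calc (a * x + b * x') ^ 2 = a ^ 2 * x ^ 2 + a * b * (2 * (x * x')) + b ^ 2 * x' ^ 2 := by ring
    _ ≤ a ^ 2 * (z * t) + a * b * (z * t' + z' * t) + b ^ 2 * (z' * t') := by gcongr
    _ = (a * z + b * z') * (a * t + b * t') := by ring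

lemma mul_sub_sq_le_of_sq_le_mul {γ x t z : ℝ} (hγ : 0 < γ) (ht : 0 ≤ t) (hz : 0 ≤ z)
    (hx : x ^ 2 ≤ z * t) (g μ : ℝ) :
    z * (μ - γ * (1 / 4 * g ^ 2)) ≤ g * x + (1 / γ * t + μ * z) := by
  have habs : |g * x| ≤ 1 / γ * t + γ * (1 / 4 * g ^ 2) * z := by
    refine abs_le_add_of_sq_le_four_mul (by positivity) (by positivity) ?_
    calc (g * x) ^ 2 = g ^ 2 * x ^ 2 := mul_pow g x 2
      _ ≤ g ^ 2 * (z * t) := by gcongr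
      _ = 4 * (1 / γ * t * (γ * (1 / 4 * g ^ 2) * z)) := by field_simp
  linarith [neg_abs_le (g * x)]

section ConicRelaxation

variable {ι : Type*} {f : (ι → ℝ) → ℝ} {g a x z w : ι → ℝ} {γ μ : ℝ}
  {p q : (ι → ℝ) × (ι → ℝ) × (ι → ℝ)}

/-- The feasible set of the conic relaxation, whose points are triples `(x, t, z)`. A feasible point
`(x, z)` of the mixed-integer problem is regarded as the triple `(x, x², z)`. -/
def conicFeasibleSet (ι : Type*) : Set ((ι → ℝ) × (ι → ℝ) × (ι → ℝ)) :=
  {p | ∀ j, 0 ≤ p.2.1 j ∧ p.2.2 j ∈ Icc 0 1 ∧ p.1 j ^ 2 ≤ p.2.2 j * p.2.1 j}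

lemma convex_conicFeasibleSet : Convex ℝ (conicFeasibleSet ι) := by
  intro p hp q hq a b ha hb hab j
  obtain ⟨ht, hz, hx⟩ := hp j
  obtain ⟨ht', hz', hx'⟩ := hq j
  obtain ⟨hconv_t, -, hconv_x⟩ := convex_rotatedCone (x := (p.1 j, p.2.1 j, p.2.2 j))
    ⟨ht, hz.1, hx⟩ (y := (q.1 j, q.2.1 j, q.2.2 j)) ⟨ht', hz'.1, hx'⟩ ha hb hab
  exact ⟨hconv_t, convex_Icc 0 1 hz hz' ha hb hab, hconv_x⟩

lemma sq_mem_conicFeasibleSet (hz : ∀ j, z j = 0 ∨ z j = 1) (hxz : ∀ j, z j = 0 → x j = 0) :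
    (x, fun j ↦ x j ^ 2, z) ∈ conicFeasibleSet ι := by
  intro j
  rcases hz j with h0 | h1
  · simp [h0, hxz j h0]
  · simp [h1, sq_nonneg]

variable [Fintype ι]

/-- The linear functional `x ↦ ∑ j, g j * x j` on `ι → ℝ`; a function has gradient `g` at a point
when `coordPairing g` is its derivative there. -/
def coordPairing (g : ι → ℝ) : (ι → ℝ) →L[ℝ] ℝ :=
  ∑ j, g j • ContinuousLinearMap.proj j

lemma coordPairing_apply (g x : ι → ℝ) : coordPairing g x = ∑ j, g j * x j := by
  simp [coordPairing]

/-- The objective of the conic relaxation at a triple `(x, t, z)`, for an arbitrary loss `f`. At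
`(x, x², z)` it is the objective of the mixed-integer problem at `(x, z)`. -/
noncomputable def conicObjective (f : (ι → ℝ) → ℝ) (γ μ : ℝ) (p : (ι → ℝ) × (ι → ℝ) × (ι → ℝ)) :
    ℝ :=
  f p.1 + (1 / γ) * ∑ j, p.2.1 j + μ * ∑ j, p.2.2 j

/-- For `0 < γ` and `z` in the unit box: the minimum over feasible `x` and `t`, with `z` fixed, of
the conic objective whose loss `f` is replaced by its linearization at `a` with gradient `g`. -/
noncomputable def linearizedBound (f : (ι → ℝ) → ℝ) (g a : ι → ℝ) (γ μ : ℝ) (z : ι → ℝ) : ℝ :=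
  f a - coordPairing g a + ∑ j, z j * (μ - γ * (1 / 4 * g j ^ 2))

lemma conicObjective_eq_add_coprod :
    conicObjective f γ μ = fun p ↦
      f p.1 + (coordPairing fun _ ↦ 1 / γ).coprod (coordPairing fun _ ↦ μ) p.2 := by
  ext p
  simp only [conicObjective, ContinuousLinearMap.coprod_apply, coordPairing_apply, Finset.mul_sum,
    add_assoc]

lemma hasFDerivAt_conicObjective (hf' : HasFDerivAt f (coordPairing g) p.1) :
    HasFDerivAt (conicObjective f γ μ) ((coordPairing g).coprod
      ((coordPairing fun _ ↦ 1 / γ).coprod (coordPairing fun _ ↦ μ))) p := by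
  rw [conicObjective_eq_add_coprod]
  exact (hf'.comp p hasFDerivAt_fst).add
    ((ContinuousLinearMap.hasFDerivAt _).comp p hasFDerivAt_snd)

lemma linearizedBound_le_conicObjective (hγ : 0 < γ) (hf : ConvexOn ℝ univ f)
    (hf' : HasFDerivAt f (coordPairing g) a) (hq : q ∈ conicFeasibleSet ι) :
    linearizedBound f g a γ μ q.2.2 ≤ conicObjective f γ μ q := by
  have hgrad : f a + coordPairing g (q.1 - a) ≤ f q.1 :=
    add_apply_sub_le_of_convexOn_of_hasFDerivWithinAt hf hf'.hasFDerivWithinAt (mem_univ _)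
      (mem_univ _)
  have hcoord : ∑ j, q.2.2 j * (μ - γ * (1 / 4 * g j ^ 2)) ≤
      ∑ j, (g j * q.1 j + (1 / γ * q.2.1 j + μ * q.2.2 j)) :=
    Finset.sum_le_sum fun j _ ↦
      mul_sub_sq_le_of_sq_le_mul hγ (hq j).1 (hq j).2.1.1 (hq j).2.2 (g j) μ
  rw [Finset.sum_add_distrib, Finset.sum_add_distrib, ← coordPairing_apply g, ← Finset.mul_sum,
    ← Finset.mul_sum] at hcoord
  rw [map_sub] at hgrad
  rw [linearizedBound, conicObjective]
  linarith

lemma conicObjective_le_linearizedBound (hf' : HasFDerivAt f (coordPairing g) p.1)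
    (hp : p ∈ conicFeasibleSet ι) (hmin : IsMinOn (conicObjective f γ μ) (conicFeasibleSet ι) p)
    (hw : ∀ j, w j ∈ Icc 0 1) :
    conicObjective f γ μ p ≤ linearizedBound f g p.1 γ μ w := by
  -- The minimizer of the linearized objective with `z = w` fixed.
  let q : (ι → ℝ) × (ι → ℝ) × (ι → ℝ) :=
    (fun j ↦ w j * (-(γ / 2) * g j), fun j ↦ w j * (-(γ / 2) * g j) ^ 2, w)
  have hq : q ∈ conicFeasibleSet ι := fun j ↦
    ⟨mul_nonneg (hw j).1 (sq_nonneg _), hw j, le_of_eq (by ring)⟩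
  have hfermat := apply_sub_nonneg_of_isMinOn_of_convex convex_conicFeasibleSet hmin
    (hasFDerivAt_conicObjective hf').hasFDerivWithinAt hp hq
  have hvalue : coordPairing g q.1 +
      (coordPairing (fun _ ↦ 1 / γ) q.2.1 + coordPairing (fun _ ↦ μ) q.2.2) =
        ∑ j, w j * (μ - γ * (1 / 4 * g j ^ 2)) := by
    simp only [coordPairing_apply, ← Finset.sum_add_distrib, q]
    refine Finset.sum_congr rfl fun j _ ↦ ?_
    field_simp
    ring
  rw [map_sub, ContinuousLinearMap.coprod_apply, ContinuousLinearMap.coprod_apply, hvalue,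
    ContinuousLinearMap.coprod_apply] at hfermat
  rw [linearizedBound, conicObjective_eq_add_coprod]
  linarith

lemma linearizedBound_update [DecidableEq ι] (j : ι) (c : ℝ) :
    linearizedBound f g a γ μ (Function.update z j c) =
      linearizedBound f g a γ μ z - (z j - c) * (μ - γ * (1 / 4 * g j ^ 2)) := by
  have hdiff : ∑ k, (z k - Function.update z j c k) * (μ - γ * (1 / 4 * g k ^ 2)) =
      (z j - c) * (μ - γ * (1 / 4 * g j ^ 2)) := by
    rw [Finset.sum_eq_single j (fun k _ hk ↦ by simp [hk]) (by simp), Function.update_self]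
  simp only [sub_mul _ _ (μ - _), Finset.sum_sub_distrib] at hdiff
  rw [linearizedBound, linearizedBound]
  linarith

lemma conicObjective_add_le_conicObjective (hγ : 0 < γ) (hf : ConvexOn ℝ univ f)
    (hf' : HasFDerivAt f (coordPairing g) p.1) (hp : p ∈ conicFeasibleSet ι)
    (hmin : IsMinOn (conicObjective f γ μ) (conicFeasibleSet ι) p) (hq : q ∈ conicFeasibleSet ι)
    (j : ι) {c : ℝ} (hc : c ∈ Icc 0 1) :
    conicObjective f γ μ p + (q.2.2 j - c) * (μ - γ * (1 / 4 * g j ^ 2)) ≤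
      conicObjective f γ μ q := by
  classical
  have hupdate : ∀ k, Function.update q.2.2 j c k ∈ Icc 0 1 :=
    (Function.forall_update_iff _ fun _ v ↦ v ∈ Icc 0 1).2 ⟨hc, fun k _ ↦ (hq k).2.1⟩
  have hupper := conicObjective_le_linearizedBound hf' hp hmin hupdate
  have hlower := linearizedBound_le_conicObjective (μ := μ) hγ hf hf' hq
  rw [linearizedBound_update] at hupper
  linarith

theorem safe_screening_REG_general (hγ : 0 < γ) (hf : ConvexOn ℝ univ f)
    (hf' : HasFDerivAt f (coordPairing g) p.1) (hp : p ∈ conicFeasibleSet ι)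
    (hmin : IsMinOn (conicObjective f γ μ) (conicFeasibleSet ι) p)
    (hz : ∀ j, z j = 0 ∨ z j = 1) (hxz : ∀ j, z j = 0 → x j = 0) {ηbar : ℝ}
    (hle : f x + (1 / γ) * ∑ j, x j ^ 2 + μ * ∑ j, z j ≤ ηbar) (j : ι) :
    (conicObjective f γ μ p + μ - γ * (1 / 4 * g j ^ 2) > ηbar → z j = 0) ∧
      (conicObjective f γ μ p - μ + γ * (1 / 4 * g j ^ 2) > ηbar → z j = 1) := by
  have hbound : ∀ c ∈ Icc (0 : ℝ) 1,
      conicObjective f γ μ p + (z j - c) * (μ - γ * (1 / 4 * g j ^ 2)) ≤ ηbar := fun c hc ↦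
    (conicObjective_add_le_conicObjective hγ hf hf' hp hmin (sq_mem_conicFeasibleSet hz hxz) j
      hc).trans hle
  refine ⟨fun hlt ↦ (hz j).resolve_right fun h1 ↦ ?_, fun hlt ↦ (hz j).resolve_left fun h0 ↦ ?_⟩
  · have := hbound 0 (left_mem_Icc.2 zero_le_one)
    rw [h1] at this
    linarith
  · have := hbound 1 (right_mem_Icc.2 zero_le_one)
    rw [h0] at this
    linarith

end ConicRelaxation

section LogLoss

variable {m n : ℕ} (A : Fin m → Fin n → ℝ) (y : Fin m → ℝ)

lemma logLoss_eq_smul_sum :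
    logLoss m n A y = (1 / (m : ℝ)) •
      ∑ i, (fun u ↦ Real.log (1 + Real.exp u)) ∘ (-(y i) • coordPairing (A i)) := by
  ext x
  simp [logLoss, coordPairing_apply]

lemma convexOn_logLoss : ConvexOn ℝ univ (logLoss m n A y) := by
  rw [logLoss_eq_smul_sum]
  refine (convexOn_finsetSum convex_univ fun i _ ↦ ?_).smul (by positivity)
  exact convexOn_log_one_add_exp.comp_linearMap (-(y i) • coordPairing (A i)).toLinearMap

lemma hasFDerivAt_logLoss (x : Fin n → ℝ) :
    HasFDerivAt (logLoss m n A y) (coordPairing fun j ↦ -∑ i,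
      y i / (m * (1 + Real.exp (y i * ∑ k, A i k * x k))) * A i j) x := by
  rw [logLoss_eq_smul_sum]
  refine ((HasFDerivAt.sum fun i _ ↦ (hasDerivAt_log_one_add_exp _).comp_hasFDerivAt x
    (-(y i) • coordPairing (A i)).hasFDerivAt).const_smul (1 / (m : ℝ))).congr_fderiv ?_
  ext v
  have hterm : ∀ i, 1 / (m : ℝ) * ((1 + Real.exp (y i * ∑ k, A i k * x k))⁻¹ *
      (y i * ∑ j, A i j * v j)) =
        ∑ j, y i / (m * (1 + Real.exp (y i * ∑ k, A i k * x k))) * A i j * v j := fun i ↦ by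
    simp only [mul_assoc _ (A i _), ← Finset.mul_sum, div_eq_mul_inv, mul_inv]
    ring
  simp only [smul_apply, sum_apply, coordPairing_apply, Real.sigmoid_def, smul_eq_mul, neg_mul,
    neg_neg, Finset.sum_neg_distrib, mul_neg, Finset.sum_mul,
    Finset.mul_sum (s := Finset.univ (α := Fin m)), hterm]
  rw [Finset.sum_comm]

end LogLoss

/-- Safe screening rule for `ℓ₀`-`ℓ₂` regularized logistic regression (Proposition 1).
`(xs, ts, zs)` is an optimal solution of the conic relaxation attaining `ηCR`;
`α` and `δ` are defined from `xs`; `ηR` is the optimal value (infimum) of the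
mixed-integer problem and `ηbar` is an upper bound on `ηR`.  Then every optimal
solution `(xh, zh)` of the mixed-integer problem attaining `ηR` satisfies
`zh j = 0` whenever `ηCR + μ - γ δ_j > ηbar`, and `zh j = 1` whenever
`ηCR - μ + γ δ_j > ηbar`. -/
theorem safe_screening_REG
    (m n : ℕ) (hm : 0 < m) (hn : 0 < n)
    (A : Fin m → Fin n → ℝ) (y : Fin m → ℝ) (hy : ∀ i, y i = 1 ∨ y i = -1)
    (γ μ : ℝ) (hγ : 0 < γ) (hμ : 0 < μ)
    -- (xs, ts, zs) is an optimal solution of the conic relaxation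
    (xs ts zs : Fin n → ℝ)
    (hts : ∀ j, 0 ≤ ts j) (hzs : ∀ j, 0 ≤ zs j ∧ zs j ≤ 1)
    (hcone_s : ∀ j, (xs j) ^ 2 ≤ zs j * ts j)
    (hopt : ∀ x t z : Fin n → ℝ, (∀ j, 0 ≤ t j) → (∀ j, 0 ≤ z j ∧ z j ≤ 1) →
      (∀ j, (x j) ^ 2 ≤ z j * t j) →
      logLoss m n A y xs + (1 / γ) * ∑ j, ts j + μ * ∑ j, zs j ≤
        logLoss m n A y x + (1 / γ) * ∑ j, t j + μ * ∑ j, z j)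
    (ηCR : ℝ)
    (hηCR : ηCR = logLoss m n A y xs + (1 / γ) * ∑ j, ts j + μ * ∑ j, zs j)
    -- dual quantities defined from xs
    (α : Fin m → ℝ)
    (hα : ∀ i, α i = y i / ((m : ℝ) * (1 + Real.exp (y i * ∑ j, A i j * xs j))))
    (δ : Fin n → ℝ)
    (hδ : ∀ j, δ j = (1 / 4) * (∑ i, α i * A i j) ^ 2)
    -- ηR is the optimal value (infimum) of the mixed-integer problem
    (ηR : ℝ)
    (hηR : ηR = sInf {v : ℝ | ∃ x z : Fin n → ℝ, (∀ j, z j = 0 ∨ z j = 1) ∧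
      (∀ j, z j = 0 → x j = 0) ∧
      v = logLoss m n A y x + (1 / γ) * ∑ j, (x j) ^ 2 + μ * ∑ j, z j})
    (ηbar : ℝ) (hub : ηR ≤ ηbar)
    -- (xh, zh) is an optimal solution of the mixed-integer problem attaining ηR
    (xh zh : Fin n → ℝ)
    (hzh : ∀ j, zh j = 0 ∨ zh j = 1) (hxz : ∀ j, zh j = 0 → xh j = 0)
    (hatt : logLoss m n A y xh + (1 / γ) * ∑ j, (xh j) ^ 2 + μ * ∑ j, zh j = ηR) :
    ∀ j, (ηCR + μ - γ * δ j > ηbar → zh j = 0) ∧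
         (ηCR - μ + γ * δ j > ηbar → zh j = 1) := by
  intro j
  rw [hδ, ← neg_sq, hηCR]
  simp only [hα]
  exact safe_screening_REG_general (p := (xs, ts, zs)) hγ (convexOn_logLoss A y)
    (hasFDerivAt_logLoss A y xs) (fun k ↦ ⟨hts k, hzs k, hcone_s k⟩)
    (fun _ hq ↦ hopt _ _ _ (fun k ↦ (hq k).1) (fun k ↦ (hq k).2.1) fun k ↦ (hq k).2.2)
    hzh hxz (hatt.trans_le hub) j
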